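/- arXiv:hep-th/0602057 — 3 statements merged into one kernel-verified Lean document; each statement's English description precedes it below -/
import Mathlib

section
/- Let r ≥ 1. In the polynomial ring ℤ[q_1,…,q_{r+1}], for every nonincreasing sequence of integers λ_1 ≥ λ_2 ≥ … ≥ λ_{r+1} ≥ 0 the following determinantal identity (the Jacobi–Trudy identity for SU(r+1), in bialternant form) holds: det[ q_i^{λ_j + (r+1) − j} ]_{i,j=1}^{r+1} = det[ H_{λ_j + i − j}(q_1,…,q_{r+1}) ]_{i,j=1}^{r+1} · det[ q_i^{(r+1) − j} ]_{i,j=1}^{r+1}. -/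
/-!
Let `H(t) = ∏ᵢ (1 - qᵢ t)⁻¹` be the generating series of the complete homogeneous symmetric
polynomials, and `Pₖ(t) = ∏_{l ≠ k} (1 - qₗ t)`, a polynomial of degree at most `r`. Then
`Pₖ(t) H(t) = (1 - qₖ t)⁻¹`, and comparing coefficients of `tⁿ` writes
`qₖⁿ` as `∑ₐ [tᵃ]Pₖ · H_{n - a}` with `a` running over `0, …, r` (`pow_eq_sum_hpoly`).

Taking `n = λⱼ + r - j` and `a = r - i`, this is a factorisation of matrices
`(qₖ ^ (λⱼ + r - j)) = M * (H_{λⱼ + i - j})`, where `M k i = [t^(r - i)]Pₖ` does not depend on `λ`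
(`det_pow_eq`). For `λ = 0` the second factor is unitriangular, so `det M` is the Vandermonde
determinant `det (qₖ ^ (r - j))`.
-/

open Finset MvPolynomial

/-- Complete homogeneous symmetric polynomial of degree `m` (`ℤ`-indexed; zero for `m < 0`)
in the family of elements `x : ι → R`: the sum of all monomials of total degree `m`. -/
noncomputable def hpoly {R : Type*} [CommRing R] {ι : Type*} [Fintype ι] [DecidableEq ι]
    (x : ι → R) (m : ℤ) : R :=
  if m < 0 then 0
  else ∑ d ∈ (Fintype.piFinset fun _ : ι => Finset.range (m.toNat + 1)).filter
      (fun d => ∑ i, d i = m.toNat),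
    ∏ i, x i ^ d i

/-- The polynomial `∏_{l ≠ k} (1 - x l * t)` in the variable `t`. -/
noncomputable def coprod {R : Type*} [CommRing R] {r : ℕ} (x : Fin (r + 1) → R)
    (k : Fin (r + 1)) : Polynomial R :=
  ∏ l ∈ univ.erase k, (1 - Polynomial.C (x l) * Polynomial.X)

lemma natDegree_coprod_le {R : Type*} [CommRing R] {r : ℕ} (x : Fin (r + 1) → R)
    (k : Fin (r + 1)) : (coprod x k).natDegree ≤ r := by
  refine (Polynomial.natDegree_prod_le _ _).trans ?_
  refine (Finset.sum_le_card_nsmul _ _ 1 fun l _ => ?_).trans (by simp)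
  exact (Polynomial.natDegree_sub_le _ _).trans
    (max_le (by simp) ((Polynomial.natDegree_C_mul_le _ _).trans Polynomial.natDegree_X_le))

/-- In nonnegative degree, `hpoly x` is a coefficient of `H(t) = ∏ᵢ (1 - xᵢ t)⁻¹`, each factor being
written as a geometric series. -/
lemma hpoly_eq_coeff {R : Type*} [CommRing R] {ι : Type*} [Fintype ι] [DecidableEq ι]
    (x : ι → R) (n : ℕ) :
    hpoly x n = PowerSeries.coeff n (∏ i, PowerSeries.mk fun m => x i ^ m) := by
  rw [PowerSeries.coeff_prod, hpoly, if_neg (by omega)]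
  refine Finset.sum_bij' (fun d _ => Finsupp.equivFunOnFinite.symm d) (fun d _ => ⇑d) ?_ ?_ ?_ ?_ ?_
  · intro d hd
    simp only [mem_filter, Int.toNat_natCast] at hd
    simp [mem_finsuppAntidiag, hd.2]
  · intro d hd
    simp only [mem_finsuppAntidiag] at hd
    simp only [mem_filter, Fintype.mem_piFinset, mem_range, Int.toNat_natCast]
    refine ⟨fun i => ?_, hd.1⟩
    have h : d i ≤ ∑ i, d i :=
      Finset.single_le_sum (f := d) (fun _ _ => Nat.zero_le _) (mem_univ i)
    exact Nat.lt_succ_of_le (h.trans_eq hd.1)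
  · intro d hd
    rfl
  · intro d hd
    ext; rfl
  · intro d hd
    simp

lemma geom_mul {R : Type*} [CommRing R] (a : R) :
    (1 - PowerSeries.C a * PowerSeries.X) * (PowerSeries.mk fun m => a ^ m) = 1 := by
  ext n
  cases n with
  | zero => simp [sub_mul, mul_assoc]
  | succ n =>
    simp [sub_mul, mul_assoc, PowerSeries.coeff_succ_X_mul, PowerSeries.coeff_one, pow_succ']

/-- The series identity `Pₖ(t) H(t) = (1 - xₖ t)⁻¹`. -/
lemma coprod_mul {R : Type*} [CommRing R] {r : ℕ} (x : Fin (r + 1) → R) (k : Fin (r + 1)) :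
    (coprod x k : PowerSeries R) * ∏ i, (PowerSeries.mk fun m => x i ^ m) =
      PowerSeries.mk fun m => x k ^ m := by
  have h : (coprod x k : PowerSeries R) =
      ∏ l ∈ univ.erase k, (1 - PowerSeries.C (x l) * PowerSeries.X) := by
    rw [coprod, ← Polynomial.coeToPowerSeries.ringHom_apply, map_prod]
    simp
  rw [h, ← Finset.mul_prod_erase univ _ (mem_univ k), mul_left_comm, ← Finset.prod_mul_distrib,
    Finset.prod_congr rfl fun l _ => geom_mul (x l)]
  simp

lemma pow_eq_sum_hpoly {R : Type*} [CommRing R] {r : ℕ} (x : Fin (r + 1) → R)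
    (k : Fin (r + 1)) (n : ℕ) :
    x k ^ n = ∑ a ∈ range (r + 1), (coprod x k).coeff a * hpoly x ((n : ℤ) - a) := by
  have h := congrArg (PowerSeries.coeff n) (coprod_mul x k)
  rw [PowerSeries.coeff_mul, PowerSeries.coeff_mk,
    Finset.Nat.sum_antidiagonal_eq_sum_range_succ_mk] at h
  -- Both index ranges extend by zeros to `range (n + r + 1)`: past `n` because `hpoly` vanishes
  -- in negative degree, past `r` because the coefficients of `coprod x k` vanish.
  rw [← h]
  trans ∑ a ∈ range (n + r + 1), (coprod x k).coeff a * hpoly x ((n : ℤ) - a)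
  · refine (Finset.sum_congr rfl fun a ha => ?_).trans
      (Finset.sum_subset (s₁ := range n.succ)
        (range_mono (Nat.succ_le_succ (Nat.le_add_right n r))) fun a _ ha => ?_)
    · have ha' : a ≤ n := by simpa [Nat.lt_succ_iff] using ha
      rw [← Nat.cast_sub ha', hpoly_eq_coeff, Polynomial.coeff_coe]
    · have ha' : n < a := by simpa using ha
      rw [hpoly, if_pos (by omega), mul_zero]
  · refine (Finset.sum_subset (range_mono (Nat.succ_le_succ (Nat.le_add_left r n)))
      fun a _ ha => ?_).symm
    have ha' : r < a := by simpa using ha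
    rw [Polynomial.coeff_eq_zero_of_natDegree_lt ((natDegree_coprod_le x k).trans_lt ha'), zero_mul]

/-- The determinant of the factorisation `(x k ^ (λⱼ + r - j)) = M * (H_{λⱼ + i - j})`, in which the
coefficient matrix `M` is independent of `λ`. -/
lemma det_pow_eq {R : Type*} [CommRing R] {r : ℕ} (x : Fin (r + 1) → R)
    (lam : Fin (r + 1) → ℕ) :
    Matrix.det (Matrix.of fun i j : Fin (r + 1) => x i ^ (lam j + (r - j.val))) =
      Matrix.det (Matrix.of fun k i : Fin (r + 1) => (coprod x k).coeff (r - i.val)) *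
      Matrix.det (Matrix.of fun i j : Fin (r + 1) =>
        hpoly x ((lam j : ℤ) + (i.val : ℤ) - (j.val : ℤ))) := by
  rw [← Matrix.det_mul]
  congr 1
  ext k j
  rw [Matrix.mul_apply, Matrix.of_apply, pow_eq_sum_hpoly, ← Finset.sum_range_reflect,
    Finset.sum_range]
  refine Finset.sum_congr rfl fun i _ => ?_
  have hi := i.isLt
  have hj := j.isLt
  simp only [Matrix.of_apply]
  congr 2
  push_cast [Nat.cast_sub (show j.val ≤ r by omega),
    Nat.cast_sub (show i.val ≤ r by omega), Nat.add_sub_cancel]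
  omega

lemma det_hpoly_sub {R : Type*} [CommRing R] {r : ℕ} (x : Fin (r + 1) → R) :
    Matrix.det (Matrix.of fun i j : Fin (r + 1) =>
      hpoly x (((0 : ℕ) : ℤ) + (i.val : ℤ) - (j.val : ℤ))) = 1 := by
  rw [Matrix.det_of_isLowerTriangular]
  · refine Finset.prod_eq_one fun i _ => ?_
    have h : (((0 : ℕ) : ℤ) + (i.val : ℤ) - (i.val : ℤ)) = ((0 : ℕ) : ℤ) := by simp
    rw [Matrix.of_apply, h, hpoly_eq_coeff]
    simp
  · intro i j hij
    have : i.val < j.val := hij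
    rw [Matrix.of_apply, hpoly, if_pos (by omega)]

/-- Jacobi–Trudy identity for SU(r+1), in bialternant form, in ℤ[q₁,…,q_{r+1}]. -/
theorem su_jacobi_trudy (r : ℕ) (hr : 1 ≤ r)
    (lam : Fin (r + 1) → ℕ) (hanti : Antitone lam) :
    Matrix.det (Matrix.of fun i j : Fin (r + 1) =>
        (X i : MvPolynomial (Fin (r + 1)) ℤ) ^ (lam j + (r - j.val))) =
    Matrix.det (Matrix.of fun i j : Fin (r + 1) =>
        hpoly (fun k : Fin (r + 1) => (X k : MvPolynomial (Fin (r + 1)) ℤ))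
          ((lam j : ℤ) + (i.val : ℤ) - (j.val : ℤ))) *
    Matrix.det (Matrix.of fun i j : Fin (r + 1) =>
        (X i : MvPolynomial (Fin (r + 1)) ℤ) ^ (r - j.val)) := by
  -- The case `λ = 0` identifies the determinant of the coefficient matrix as the Vandermonde one.
  have h := det_pow_eq (fun k : Fin (r + 1) => (X k : MvPolynomial (Fin (r + 1)) ℤ)) fun _ => 0
  rw [det_hpoly_sub, mul_one] at h
  simp only [zero_add] at h
  rw [det_pow_eq (fun k : Fin (r + 1) => (X k : MvPolynomial (Fin (r + 1)) ℤ)) lam, h, mul_comm]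
end

section
/- Let r ≥ 1 and work in the field ℚ(u_1,…,u_r) of rational functions in r indeterminates over ℚ; set q_i = u_i^2. Let λ_1 ≥ λ_2 ≥ … ≥ λ_r ≥ 0 be integers, and let H_m denote the complete homogeneous symmetric polynomial of degree m in the 2r+1 elements q_1,…,q_r, 1, q_1^{−1},…,q_r^{−1}. Then (the Jacobi–Trudy identity for the tensor representations of Spin(2r+1), in alternant form): det[ u_i^{2λ_j + 2r + 1 − 2j} − u_i^{−(2λ_j + 2r + 1 − 2j)} ]_{i,j=1}^{r} = det[ H_{λ_j + i − j} − H_{λ_j − i − j} ]_{i,j=1}^{r} · det[ u_i^{2r + 1 − 2j} − u_i^{−(2r + 1 − 2j)} ]_{i,j=1}^{r}. -/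
/-!
Each alternant entry is a combination of the Jacobi–Trudy entries in the same column, with
coefficients depending only on the row; hence the alternant matrix for `lam` factors as `M` times
the Jacobi–Trudy matrix for `lam`, where `M` does not involve `lam`. For `lam = 0` the
Jacobi–Trudy matrix is unitriangular, so `det M` is the denominator alternant, and multiplicativity
of the determinant gives the identity.

The factorization comes from generating series. With `u = u_i` and `q = u²`,
`∑_p (u^(2p+1) - u^(-2p-1)) t^p = (u - u⁻¹)(1 + t) / ((1 - q t)(1 - q⁻¹ t))`, while
`∑_m H_m t^m = 1 / ((1 - t) ∏_k (1 - q_k t)(1 - q_k⁻¹ t))`. Their quotient is the polynomial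
`(u - u⁻¹)(1 - t²) ∏_{k ≠ i} (1 - q_k t)(1 - q_k⁻¹ t)` (`rowPoly`), which has degree `2r` and
antisymmetric coefficients, so it is a combination of the `t^(r-1-k) - t^(r+1+k)` for
`0 ≤ k < r` (`antipalindromic_expansion`). Reading off the coefficient of `t^p` with
`p = lam j + r - 1 - j` (rows and columns indexed from `0`) gives the row expansion
(`alternant_entry`).
-/


open Finset MvPolynomial

/-- The geometric series `∑ xⁿ tⁿ`. -/
noncomputable def geomSeries {R : Type*} [CommRing R] (x : R) : PowerSeries R :=
  PowerSeries.mk fun n => x ^ n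

lemma geomSeries_mul {R : Type*} [CommRing R] (x : R) :
    geomSeries x * (1 - PowerSeries.C x * PowerSeries.X) = 1 := by
  ext n
  rw [mul_sub, mul_one, ← mul_assoc, mul_comm _ (PowerSeries.C x), mul_assoc]
  cases n with
  | zero => simp [geomSeries]
  | succ n => simp [geomSeries, PowerSeries.coeff_succ_mul_X, pow_succ', PowerSeries.coeff_one]

lemma coeff_prod_geomSeries {R : Type*} [CommRing R] {ι : Type*} [Fintype ι] [DecidableEq ι]
    (x : ι → R) (m : ℕ) :
    PowerSeries.coeff m (∏ i, geomSeries (x i)) = hpoly x m := by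
  rw [PowerSeries.coeff_prod, hpoly, if_neg (by omega)]
  refine Finset.sum_bij' (fun l _ => ⇑l) (fun d _ => Finsupp.equivFunOnFinite.symm d)
    ?_ ?_ ?_ ?_ ?_
  · intro l hl
    rw [Finset.mem_finsuppAntidiag] at hl
    rw [Finset.mem_filter, Fintype.mem_piFinset]
    refine ⟨fun i => ?_, by simpa using hl.1⟩
    have := Finset.single_le_sum (f := fun i => l i) (fun _ _ => Nat.zero_le _) (Finset.mem_univ i)
    simp only [Finset.mem_range, Int.toNat_natCast]
    have h2 : ∑ i, l i = m := hl.1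
    omega
  · intro d hd
    rw [Finset.mem_filter] at hd
    rw [Finset.mem_finsuppAntidiag]
    exact ⟨by simpa using hd.2, Finset.subset_univ _⟩
  · intro l _; ext; simp
  · intro d _; ext; simp
  · intro l _; simp [geomSeries]

lemma coeff_X_pow_mul_prod_geomSeries {R : Type*} [CommRing R] {ι : Type*} [Fintype ι]
    [DecidableEq ι] (x : ι → R) (p n : ℕ) :
    PowerSeries.coeff p (PowerSeries.X ^ n * ∏ i, geomSeries (x i)) =
      hpoly x ((p : ℤ) - n) := by
  rw [PowerSeries.coeff_X_pow_mul']
  split_ifs with h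
  · rw [coeff_prod_geomSeries, Nat.cast_sub h]
  · rw [hpoly, if_pos (by omega)]

/-- A polynomial of degree at most `2r` whose coefficient sequence is antisymmetric about `r` is a
combination of the binomials `t^(r-1-k) - t^(r+1+k)`; characteristic zero kills the middle
coefficient. -/
lemma antipalindromic_expansion {K : Type*} [Field K] [CharZero K] (r : ℕ) (D : Polynomial K)
    (hdeg : D.natDegree ≤ 2 * r) (hD : D.reflect (2 * r) = -D) :
    D = ∑ k ∈ Finset.range r, Polynomial.C (D.coeff (r - 1 - k)) *
      (Polynomial.X ^ (r - 1 - k) - Polynomial.X ^ (r + 1 + k)) := by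
  have hc : ∀ m ≤ 2 * r, D.coeff (2 * r - m) = -D.coeff m := fun m hm => by
    rw [← Polynomial.revAt_le hm, ← Polynomial.coeff_reflect, hD, Polynomial.coeff_neg]
  have hmid : D.coeff r = 0 := by
    have := hc r (by omega)
    rw [show 2 * r - r = r by omega] at this
    exact self_eq_neg.mp this
  conv_lhs => rw [D.as_sum_range_C_mul_X_pow' (n := r + 1 + r) (by omega)]
  rw [Finset.sum_range_add, Finset.sum_range_succ, hmid, map_zero, zero_mul, add_zero,
    ← Finset.sum_range_reflect, ← Finset.sum_add_distrib]
  refine Finset.sum_congr rfl fun k hk => ?_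
  have hk := Finset.mem_range.mp hk
  have := hc (r - 1 - k) (by omega)
  rw [show 2 * r - (r - 1 - k) = r + 1 + k by omega] at this
  rw [this, map_neg]
  ring

/-- The quadratic `(1 - q t)(1 - q⁻¹ t)`. -/
noncomputable def recipQuad {K : Type*} [Field K] (q : K) : Polynomial K :=
  (1 - Polynomial.C q * Polynomial.X) * (1 - Polynomial.C q⁻¹ * Polynomial.X)

lemma natDegree_one_sub_C_mul_X_le {K : Type*} [Field K] (q : K) :
    (1 - Polynomial.C q * Polynomial.X : Polynomial K).natDegree ≤ 1 := by
  compute_degree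

lemma recipQuad_natDegree {K : Type*} [Field K] (q : K) : (recipQuad q).natDegree ≤ 2 :=
  Polynomial.natDegree_mul_le_of_le (natDegree_one_sub_C_mul_X_le q)
    (natDegree_one_sub_C_mul_X_le q⁻¹)

lemma recipQuad_reflect {K : Type*} [Field K] {q : K} (hq : q ≠ 0) :
    (recipQuad q).reflect 2 = recipQuad q := by
  have h : ∀ a : K, (1 - Polynomial.C a * Polynomial.X : Polynomial K).reflect 1 =
      Polynomial.X - Polynomial.C a := fun a => by
    have h1 := Polynomial.reflect_C_mul_X_pow (c := a) 1 1
    rw [pow_one] at h1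
    rw [Polynomial.reflect_sub, h1, Polynomial.reflect_one]
    simp [Polynomial.revAt_le]
  have hC : (Polynomial.C q * Polynomial.C q⁻¹ : Polynomial K) = 1 := by
    rw [← Polynomial.C_mul, mul_inv_cancel₀ hq, Polynomial.C_1]
  rw [recipQuad, Polynomial.reflect_mul _ _ (natDegree_one_sub_C_mul_X_le q)
    (natDegree_one_sub_C_mul_X_le q⁻¹), h, h]
  linear_combination (1 - Polynomial.X ^ 2) * hC

lemma prod_recipQuad {K ι : Type*} [Field K] (q : ι → K) (hq : ∀ i, q i ≠ 0)
    (s : Finset ι) :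
    (∏ i ∈ s, recipQuad (q i)).natDegree ≤ 2 * s.card ∧
      (∏ i ∈ s, recipQuad (q i)).reflect (2 * s.card) = ∏ i ∈ s, recipQuad (q i) := by
  classical
  induction s using Finset.induction_on with
  | empty => simp
  | insert a s ha ih =>
    rw [Finset.prod_insert ha, Finset.card_insert_of_notMem ha,
      show 2 * (s.card + 1) = 2 + 2 * s.card by ring]
    refine ⟨Polynomial.natDegree_mul_le_of_le (recipQuad_natDegree _) ih.1, ?_⟩
    rw [Polynomial.reflect_mul _ _ (recipQuad_natDegree _) ih.1, ih.2, recipQuad_reflect (hq a)]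

/-- The numerator `(u_i - u_i⁻¹)(1 - t²) ∏_{k ≠ i} (1 - q_k t)(1 - q_k⁻¹ t)`: its product with the
generating series of the `H_m` is the generating series of the alternant entries in row `i`. -/
noncomputable def rowPoly {K : Type*} [Field K] {r : ℕ} (u : Fin r → K) (i : Fin r) :
    Polynomial K :=
  Polynomial.C (u i - (u i)⁻¹) *
    ((1 - Polynomial.X ^ 2) * ∏ k ∈ Finset.univ.erase i, recipQuad (u k ^ 2))

lemma rowPoly_expansion {K : Type*} [Field K] [CharZero K] {r : ℕ} (u : Fin r → K)
    (hu : ∀ i, u i ≠ 0) (i : Fin r) :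
    rowPoly u i = ∑ k ∈ Finset.range r, Polynomial.C ((rowPoly u i).coeff (r - 1 - k)) *
      (Polynomial.X ^ (r - 1 - k) - Polynomial.X ^ (r + 1 + k)) := by
  obtain ⟨h1, h2⟩ := prod_recipQuad (fun k => u k ^ 2) (fun k => pow_ne_zero 2 (hu k))
    (Finset.univ.erase i)
  have hd : (1 - Polynomial.X ^ 2 : Polynomial K).natDegree ≤ 2 := by compute_degree
  have hr : 2 + 2 * (Finset.univ.erase i).card = 2 * r := by
    rw [Finset.card_erase_of_mem (Finset.mem_univ i), Finset.card_univ, Fintype.card_fin]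
    have := i.pos
    omega
  apply antipalindromic_expansion
  · rw [← hr]
    exact (Polynomial.natDegree_C_mul_le _ _).trans (Polynomial.natDegree_mul_le_of_le hd h1)
  · have h3 : (1 - Polynomial.X ^ 2 : Polynomial K).reflect 2 = -(1 - Polynomial.X ^ 2) := by
      have := Polynomial.reflect_monomial (R := K) 2 2
      rw [Polynomial.reflect_sub, Polynomial.reflect_one, this]
      simp [Polynomial.revAt_le]
    rw [rowPoly, Polynomial.reflect_C_mul, ← hr, Polynomial.reflect_mul _ _ hd h1, h2, h3]
    ring

lemma alternant_series {K : Type*} [Field K] {u : K} (hu : u ≠ 0) :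
    (PowerSeries.mk fun p => u ^ (2 * p + 1) - (u⁻¹) ^ (2 * p + 1)) =
      PowerSeries.C (u - u⁻¹) * (1 + PowerSeries.X) *
        (geomSeries (u ^ 2) * geomSeries (u ^ 2)⁻¹) := by
  have h1 := geomSeries_mul (u ^ 2)
  have h2 := geomSeries_mul (u ^ 2)⁻¹
  have h : (PowerSeries.mk fun p => u ^ (2 * p + 1) - (u⁻¹) ^ (2 * p + 1)) =
      PowerSeries.C u * geomSeries (u ^ 2) - PowerSeries.C u⁻¹ * geomSeries (u ^ 2)⁻¹ := by
    ext n
    simp [geomSeries]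
    ring
  have e1 : (PowerSeries.C u * PowerSeries.C (u ^ 2)⁻¹ : PowerSeries K) = PowerSeries.C u⁻¹ := by
    rw [← map_mul]; congr 1; field_simp
  have e2 : (PowerSeries.C u⁻¹ * PowerSeries.C (u ^ 2) : PowerSeries K) = PowerSeries.C u := by
    rw [← map_mul]; congr 1; field_simp
  rw [h, map_sub]
  linear_combination (-PowerSeries.C u * geomSeries (u ^ 2)) * h2 +
    (PowerSeries.C u⁻¹ * geomSeries (u ^ 2)⁻¹) * h1 -
    (geomSeries (u ^ 2) * geomSeries (u ^ 2)⁻¹ * PowerSeries.X) * e1 +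
    (geomSeries (u ^ 2) * geomSeries (u ^ 2)⁻¹ * PowerSeries.X) * e2

lemma rowPoly_mul_series {K : Type*} [Field K] {r : ℕ} (u : Fin r → K)
    (hu : ∀ i, u i ≠ 0) (i : Fin r) :
    (rowPoly u i : PowerSeries K) * ∏ s, geomSeries (Sum.elim (fun i => u i ^ 2)
        (Sum.elim (fun _ : Unit => (1 : K)) fun i => (u i ^ 2)⁻¹) s) =
      PowerSeries.mk fun p => u i ^ (2 * p + 1) - ((u i)⁻¹) ^ (2 * p + 1) := by
  have hq : ∀ q : K, (recipQuad q : PowerSeries K) * (geomSeries q * geomSeries q⁻¹) = 1 := by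
    intro q
    have e : (recipQuad q : PowerSeries K) = (1 - PowerSeries.C q * PowerSeries.X) *
        (1 - PowerSeries.C q⁻¹ * PowerSeries.X) := by
      simp [recipQuad]
    rw [e]
    linear_combination (geomSeries q⁻¹ * (1 - PowerSeries.C q⁻¹ * PowerSeries.X)) *
      geomSeries_mul q + geomSeries_mul q⁻¹
  have hprod : ((∏ k ∈ Finset.univ.erase i, recipQuad (u k ^ 2) : Polynomial K) : PowerSeries K) *
      ∏ k ∈ Finset.univ.erase i, (geomSeries (u k ^ 2) * geomSeries (u k ^ 2)⁻¹) = 1 := by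
    rw [← Polynomial.coeToPowerSeries.ringHom_apply, map_prod, ← Finset.prod_mul_distrib]
    exact Finset.prod_eq_one fun k _ => hq _
  have hone := geomSeries_mul (1 : K)
  rw [map_one, one_mul] at hone
  have hsplit := Finset.mul_prod_erase Finset.univ
    (fun k => geomSeries (u k ^ 2) * geomSeries (u k ^ 2)⁻¹) (Finset.mem_univ i)
  rw [alternant_series (hu i)]
  simp only [Fintype.prod_sum_type, Sum.elim_inl, Sum.elim_inr, Finset.univ_unique,
    Finset.prod_singleton]
  rw [Finset.prod_mul_distrib (s := Finset.univ)] at hsplit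
  have hrow : (rowPoly u i : PowerSeries K) = PowerSeries.C (u i - (u i)⁻¹) *
      ((1 - PowerSeries.X ^ 2) *
        ((∏ k ∈ Finset.univ.erase i, recipQuad (u k ^ 2) : Polynomial K) : PowerSeries K)) := by
    rw [rowPoly, Polynomial.coe_mul, Polynomial.coe_mul, Polynomial.coe_C, Polynomial.coe_sub,
      Polynomial.coe_pow, Polynomial.coe_one, Polynomial.coe_X]
  rw [hrow]
  generalize ((∏ k ∈ Finset.univ.erase i, recipQuad (u k ^ 2) : Polynomial K) :
    PowerSeries K) = P at *
  linear_combination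
    (-PowerSeries.C (u i - (u i)⁻¹) * (1 - PowerSeries.X ^ 2) * P * geomSeries 1) * hsplit +
    (PowerSeries.C (u i - (u i)⁻¹) * (1 - PowerSeries.X ^ 2) * geomSeries 1 *
      (geomSeries (u i ^ 2) * geomSeries (u i ^ 2)⁻¹)) * hprod +
    (PowerSeries.C (u i - (u i)⁻¹) * (1 + PowerSeries.X) *
      (geomSeries (u i ^ 2) * geomSeries (u i ^ 2)⁻¹)) * hone

/-- The row expansion: each alternant entry is a combination of the Jacobi–Trudy entries with
coefficients that do not depend on `p`. -/
lemma alternant_entry {K : Type*} [Field K] [CharZero K] {r : ℕ} (u : Fin r → K)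
    (hu : ∀ i, u i ≠ 0) (i : Fin r) (p : ℕ) :
    u i ^ (2 * p + 1) - ((u i)⁻¹) ^ (2 * p + 1) =
      ∑ k : Fin r, (rowPoly u i).coeff (r - 1 - k) *
        (hpoly (Sum.elim (fun i => u i ^ 2)
            (Sum.elim (fun _ : Unit => (1 : K)) fun i => (u i ^ 2)⁻¹)) ((p : ℤ) - r + 1 + k) -
          hpoly (Sum.elim (fun i => u i ^ 2)
            (Sum.elim (fun _ : Unit => (1 : K)) fun i => (u i ^ 2)⁻¹)) ((p : ℤ) - r - 1 - k)) := by
  have h := congrArg (PowerSeries.coeff p) (rowPoly_mul_series u hu i)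
  rw [PowerSeries.coeff_mk] at h
  rw [← h, rowPoly_expansion u hu i, ← Polynomial.coeToPowerSeries.ringHom_apply, map_sum,
    Finset.sum_mul, map_sum, Finset.sum_range, ← rowPoly_expansion u hu i]
  refine Finset.sum_congr rfl fun k _ => ?_
  have hk := k.isLt
  simp only [map_mul, map_sub, map_pow, Polynomial.coeToPowerSeries.ringHom_apply,
    Polynomial.coe_C, Polynomial.coe_X]
  rw [mul_assoc, PowerSeries.coeff_C_mul, sub_mul, map_sub, coeff_X_pow_mul_prod_geomSeries,
    coeff_X_pow_mul_prod_geomSeries]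
  rw [show (p : ℤ) - ((r - 1 - k : ℕ) : ℤ) = (p : ℤ) - r + 1 + k by omega,
    show (p : ℤ) - ((r + 1 + k : ℕ) : ℤ) = (p : ℤ) - r - 1 - k by omega]

lemma hpoly_zero {R : Type*} [CommRing R] {ι : Type*} [Fintype ι] [DecidableEq ι] (x : ι → R) :
    hpoly x 0 = 1 := by
  have := coeff_prod_geomSeries x 0
  rw [Nat.cast_zero] at this
  rw [← this]
  simp [map_prod, geomSeries]

lemma hpoly_neg {R : Type*} [CommRing R] {ι : Type*} [Fintype ι] [DecidableEq ι] (x : ι → R)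
    {m : ℤ} (hm : m < 0) : hpoly x m = 0 := if_pos hm

/-- For the zero weight the Jacobi–Trudy matrix is lower unitriangular. -/
lemma det_jacobiTrudi_zero {R : Type*} [CommRing R] {ι : Type*} [Fintype ι] [DecidableEq ι]
    (x : ι → R) (r : ℕ) :
    (Matrix.of fun i j : Fin r =>
      hpoly x ((i.val : ℤ) - (j.val : ℤ)) -
        hpoly x (0 - (i.val : ℤ) - (j.val : ℤ) - 2)).det = 1 := by
  rw [Matrix.det_of_isLowerTriangular]
  · refine Finset.prod_eq_one fun i _ => ?_
    rw [Matrix.of_apply, sub_self, hpoly_zero, hpoly_neg _ (by omega), sub_zero]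
  · intro i j hij
    have hij : i < j := hij
    rw [Matrix.of_apply, hpoly_neg _ (by omega), hpoly_neg _ (by omega), sub_zero]

/-- Matrix form of `alternant_entry`, applied with `p = lam j + r - 1 - j`. The left factor does not
involve `lam`. -/
lemma alternant_eq_mul {K : Type*} [Field K] [CharZero K] {r : ℕ} (u : Fin r → K)
    (hu : ∀ i, u i ≠ 0) (lam : Fin r → ℤ) (hlam : ∀ j, 0 ≤ lam j) :
    (Matrix.of fun i j : Fin r =>
        u i ^ (2 * lam j + 2 * r - 1 - 2 * (j.val : ℤ)) -
        u i ^ (-(2 * lam j + 2 * r - 1 - 2 * (j.val : ℤ)))) =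
    (Matrix.of fun i k : Fin r => (rowPoly u i).coeff (r - 1 - k)) *
    (Matrix.of fun i j : Fin r =>
        hpoly (Sum.elim (fun i => u i ^ 2)
          (Sum.elim (fun _ : Unit => (1 : K)) fun i => (u i ^ 2)⁻¹))
            (lam j + (i.val : ℤ) - (j.val : ℤ)) -
        hpoly (Sum.elim (fun i => u i ^ 2)
          (Sum.elim (fun _ : Unit => (1 : K)) fun i => (u i ^ 2)⁻¹))
            (lam j - (i.val : ℤ) - (j.val : ℤ) - 2)) := by
  ext i j
  have hj := j.isLt
  have hl := hlam j
  obtain ⟨p, hp⟩ := Int.eq_ofNat_of_zero_le (a := lam j + r - 1 - (j.val : ℤ)) (by omega)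
  have he : 2 * lam j + 2 * r - 1 - 2 * (j.val : ℤ) = ((2 * p + 1 : ℕ) : ℤ) := by
    push_cast; omega
  rw [Matrix.mul_apply]
  simp only [Matrix.of_apply]
  rw [he, zpow_neg, zpow_natCast, ← inv_pow, alternant_entry u hu i p]
  refine Finset.sum_congr rfl fun k _ => ?_
  congr 3 <;> omega

/-- Jacobi–Trudy identity for the tensor representations of Spin(2r+1), in alternant form. -/
theorem spin_odd_tensor_jacobi_trudy (r : ℕ) (hr : 1 ≤ r)
    (lam : Fin r → ℤ) (hanti : Antitone lam) (hnonneg : ∀ j, 0 ≤ lam j) :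
    let K := FractionRing (MvPolynomial (Fin r) ℚ)
    let u : Fin r → K := fun i => algebraMap (MvPolynomial (Fin r) ℚ) K (X i)
    let q : Fin r → K := fun i => u i ^ 2
    let H : ℤ → K := hpoly (Sum.elim q (Sum.elim (fun _ : Unit => 1) fun i => (q i)⁻¹))
    Matrix.det (Matrix.of fun i j : Fin r =>
        u i ^ (2 * lam j + 2 * r - 1 - 2 * (j.val : ℤ)) -
        u i ^ (-(2 * lam j + 2 * r - 1 - 2 * (j.val : ℤ)))) =
    Matrix.det (Matrix.of fun i j : Fin r =>
        H (lam j + (i.val : ℤ) - (j.val : ℤ)) - H (lam j - (i.val : ℤ) - (j.val : ℤ) - 2)) *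
    Matrix.det (Matrix.of fun i j : Fin r =>
        u i ^ (2 * (r : ℤ) - 1 - 2 * (j.val : ℤ)) -
        u i ^ (-(2 * (r : ℤ) - 1 - 2 * (j.val : ℤ)))) := by
  intro K u q H
  have hu : ∀ i, u i ≠ 0 := fun i =>
    (map_ne_zero_iff _ (IsFractionRing.injective (MvPolynomial (Fin r) ℚ) K)).mpr
      (MvPolynomial.X_ne_zero i)
  have : CharZero K := algebraRat.charZero K
  have h0 := alternant_eq_mul u hu (fun _ => 0) (fun _ => le_rfl)
  simp only [mul_zero, zero_add] at h0
  rw [alternant_eq_mul u hu lam hnonneg, h0, Matrix.det_mul, Matrix.det_mul,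
    det_jacobiTrudi_zero, mul_one, mul_comm]
end

section
/- Let r ≥ 1 and work in the field ℚ(q_1,…,q_r) of rational functions in r indeterminates over ℚ. Let λ_1 ≥ λ_2 ≥ … ≥ λ_r ≥ 1 be integers, put ℓ_j = λ_j + r − j, and let H_m denote the complete homogeneous symmetric polynomial of degree m in the 2r elements q_1,…,q_r, q_1^{−1},…,q_r^{−1}. Define the r×r matrix N by N_{1j} = H_{λ_j − j} (first row) and N_{ij} = H_{λ_j − 1 + i − j} + H_{λ_j + 1 − i − j} for 2 ≤ i ≤ r. Then (the Jacobi–Trudy identity for the tensor representations of Spin(2r) with λ_r > 0, in alternant form): det[ q_i^{ℓ_j} + q_i^{−ℓ_j} ]_{i,j=1}^{r} + det[ q_i^{ℓ_j} − q_i^{−ℓ_j} ]_{i,j=1}^{r} = ( det[ H_{λ_j + i − j} − H_{λ_j − i − j} ]_{i,j=1}^{r} + ∏_{i=1}^{r}(q_i − q_i^{−1}) · det N ) · det[ (q_i + q_i^{−1})^{r − j} ]_{i,j=1}^{r}. -/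
/-!
The two determinants on the left are treated separately: up to the Vandermonde factor in
`y i = q i + (q i)⁻¹`, the first is an even orthogonal character, and the second is
`∏ (q i - (q i)⁻¹)` times a symplectic character, each given by its Jacobi-Trudy determinant.

Let `G` be the generating series of the `H m`, so `G = ∏ 1 / (1 - y p t + t ^ 2)`. Multiplying
`G` by the quadratic factors with `p ≠ i` leaves `1 / (1 - y i t + t ^ 2)`, whose coefficients are
`(q ^ (m + 1) - q ^ (-(m + 1))) / (q - q⁻¹)` for `q = q i`; multiplying further by `1 - t ^ 2`
gives `q ^ m + q ^ (-m)` for `m ≥ 1`, but `1` for `m = 0`, which is why `lam j ≥ 1` is needed.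

On coefficient sequences, multiplication by `1 - y t + t ^ 2` is, up to a shift, the operator
`f ↦ f(n + 1) - y f(n) + f(n - 1)`. It sends `H(n + k) ± H(n - k)` to a combination of the same
expressions with `k - 1`, `k`, `k + 1`. Hence the entries of each alternant, as functions of
`n = lam j - j - 1`, are combinations of the `r` functions of `n` that form the rows of the
Jacobi-Trudy matrix (`prod_quad_mem`). So the alternant is `det A` times the Jacobi-Trudy
determinant, with `A` independent of `lam` (`det_eq_mul_det`). Specializing `n` so that the
Jacobi-Trudy matrix is unitriangular shows that `det A` is a determinant of monic polynomials in
the `y i` of degrees `r - 1, …, 0`, that is, the Vandermonde factor (`det_monic`).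
-/

open Finset MvPolynomial

/-! ### Two-sided coefficient sequences and the generating series -/

namespace SpinJT

variable {K : Type*} [Field K]

/-- The coefficients of a power series as a two-sided sequence, zero at negative indices. -/
noncomputable def zcoeff (F : PowerSeries K) (m : ℤ) : K :=
  if m < 0 then 0 else PowerSeries.coeff m.toNat F

lemma zcoeff_natCast (F : PowerSeries K) (m : ℕ) :
    zcoeff F (m : ℤ) = PowerSeries.coeff m F := by
  simp [zcoeff]

lemma zcoeff_neg (F : PowerSeries K) {m : ℤ} (hm : m < 0) : zcoeff F m = 0 := by
  simp [zcoeff, hm]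

lemma zcoeff_add (F G : PowerSeries K) (m : ℤ) :
    zcoeff (F + G) m = zcoeff F m + zcoeff G m := by
  unfold zcoeff; split_ifs <;> simp

lemma zcoeff_sub (F G : PowerSeries K) (m : ℤ) :
    zcoeff (F - G) m = zcoeff F m - zcoeff G m := by
  unfold zcoeff; split_ifs <;> simp

lemma zcoeff_C_mul (y : K) (F : PowerSeries K) (m : ℤ) :
    zcoeff (PowerSeries.C y * F) m = y * zcoeff F m := by
  unfold zcoeff; split_ifs <;> simp

lemma zcoeff_X_mul (F : PowerSeries K) (m : ℤ) :
    zcoeff (PowerSeries.X * F) m = zcoeff F (m - 1) := by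
  rcases lt_or_ge m 0 with hm | hm
  · rw [zcoeff_neg _ hm, zcoeff_neg _ (by omega)]
  · lift m to ℕ using hm
    rw [zcoeff_natCast]
    cases m with
    | zero => rw [PowerSeries.coeff_zero_X_mul, zcoeff_neg _ (by simp)]
    | succ k =>
      rw [PowerSeries.coeff_succ_X_mul, ← zcoeff_natCast]
      congr 1; push_cast; ring

/-- The quadratic factor `1 - y t + t ^ 2`, which is `(1 - q t) (1 - q⁻¹ t)` for
`y = q + q⁻¹`. -/
noncomputable def quad (y : K) : PowerSeries K :=
  1 - PowerSeries.C y * PowerSeries.X + PowerSeries.X * PowerSeries.X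

lemma zcoeff_mul_quad (F : PowerSeries K) (y : K) (m : ℤ) :
    zcoeff (F * quad y) m = zcoeff F m - y * zcoeff F (m - 1) + zcoeff F (m - 2) := by
  have : F * quad y = F - PowerSeries.C y * (PowerSeries.X * F)
      + PowerSeries.X * (PowerSeries.X * F) := by
    unfold quad; ring
  rw [this, zcoeff_add, zcoeff_sub, zcoeff_C_mul]
  simp only [zcoeff_X_mul]
  rw [sub_sub]; norm_num

/-- The geometric series `1 / (1 - a t)`. -/
noncomputable def geom (a : K) : PowerSeries K := PowerSeries.mk fun n => a ^ n

lemma geom_mul (a : K) : geom a * (1 - PowerSeries.C a * PowerSeries.X) = 1 := by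
  have : geom a * (1 - PowerSeries.C a * PowerSeries.X)
      = geom a - PowerSeries.C a * (PowerSeries.X * geom a) := by ring
  rw [this]
  ext n
  cases n with
  | zero => simp [geom]
  | succ k => simp [geom, PowerSeries.coeff_succ_X_mul, pow_succ', PowerSeries.coeff_one]

lemma geom_mul_geom_inv_mul_quad {a : K} (ha : a ≠ 0) :
    geom a * geom a⁻¹ * quad (a + a⁻¹) = 1 := by
  have hC : (PowerSeries.C a * PowerSeries.C a⁻¹ : PowerSeries K) = 1 := by
    rw [← map_mul, mul_inv_cancel₀ ha, map_one]
  have h : quad (a + a⁻¹) = (1 - PowerSeries.C a * PowerSeries.X) *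
      (1 - PowerSeries.C a⁻¹ * PowerSeries.X) := by
    unfold quad
    rw [map_add]
    linear_combination (-PowerSeries.X * PowerSeries.X) * hC
  rw [h]
  linear_combination (geom a⁻¹ * (1 - PowerSeries.C a⁻¹ * PowerSeries.X)) * geom_mul a
    + geom_mul a⁻¹

lemma hpoly_eq_zcoeff {ι : Type*} [Fintype ι] [DecidableEq ι] (x : ι → K) (m : ℤ) :
    hpoly x m = zcoeff (∏ i, geom (x i)) m := by
  unfold hpoly zcoeff
  split_ifs with hm
  · rfl
  rw [PowerSeries.coeff_prod]
  simp only [geom, PowerSeries.coeff_mk]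
  refine Finset.sum_bij' (fun d _ => Finsupp.equivFunOnFinite.symm d) (fun l _ => ⇑l) ?_ ?_ ?_ ?_ ?_
  · intro d hd
    simp only [Finset.mem_filter] at hd
    simp [Finset.mem_finsuppAntidiag, hd.2]
  · intro l hl
    simp only [Finset.mem_finsuppAntidiag] at hl
    simp only [Finset.mem_filter, Fintype.mem_piFinset, Finset.mem_range, Nat.lt_succ_iff]
    refine ⟨fun i => ?_, hl.1⟩
    rw [← hl.1]
    exact Finset.single_le_sum (f := fun i => l i) (fun _ _ => Nat.zero_le _) (Finset.mem_univ i)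
  · intro d _; rfl
  · intro l _; ext i; rfl
  · intro d _; rfl

lemma hpoly_sum_elim {r : ℕ} (q : Fin r → K) (m : ℤ) :
    hpoly (Sum.elim q fun i => (q i)⁻¹) m =
      zcoeff (∏ i, (geom (q i) * geom (q i)⁻¹)) m := by
  rw [hpoly_eq_zcoeff, Fintype.prod_sum_type, Finset.prod_mul_distrib]
  simp

/-! ### Spans stable under multiplication by quadratic factors -/

/-- The operator `f ↦ f(· + 1) - y f + f(· - 1)` on two-sided sequences. -/
def bump (y : K) : (ℤ → K) →ₗ[K] (ℤ → K) where
  toFun f n := f (n + 1) - y * f n + f (n - 1)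
  map_add' f g := by ext n; simp only [Pi.add_apply]; ring
  map_smul' c f := by
    ext n; simp only [Pi.smul_apply, smul_eq_mul, RingHom.id_apply]; ring

/-- The span of the first `m` members of a family of two-sided sequences. -/
def W (B : ℕ → ℤ → K) (m : ℕ) : Submodule K (ℤ → K) :=
  Submodule.span K (Set.range fun k : Fin m => B k)

lemma mem_W (B : ℕ → ℤ → K) {m k : ℕ} (h : k < m) : B k ∈ W B m :=
  Submodule.subset_span ⟨⟨k, h⟩, rfl⟩

/-- The hypothesis `hB` says that `f ↦ f(· + 1) + f(· - 1)` raises the filtration `W B` by one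
step on each generator; hence so does `bump y` on all of it. -/
lemma bump_mem (B : ℕ → ℤ → K)
    (hB : ∀ k, (fun n => B k (n + 1) + B k (n - 1)) ∈ W B (k + 2))
    (y : K) {m : ℕ} {f : ℤ → K} (hf : f ∈ W B m) : bump y f ∈ W B (m + 1) := by
  have key : W B m ≤ (W B (m + 1)).comap (bump y) := by
    refine Submodule.span_le.2 ?_
    rintro _ ⟨k, rfl⟩
    have hmono : W B ((k : ℕ) + 2) ≤ W B (m + 1) := by
      refine Submodule.span_le.2 ?_
      rintro _ ⟨l, rfl⟩
      exact mem_W B (by omega)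
    have e : bump y (B k) = (fun n => B k (n + 1) + B k (n - 1)) - y • B k := by
      ext n
      simp only [bump, LinearMap.coe_mk, AddHom.coe_mk, Pi.sub_apply, Pi.smul_apply, smul_eq_mul]
      ring
    change bump y (B k) ∈ W B (m + 1)
    rw [e]
    exact Submodule.sub_mem _ (hmono (hB k)) (Submodule.smul_mem _ _ (mem_W B (by omega)))
  exact key hf

/-- Each quadratic factor multiplied into `F` acts, after shifting the index by one, as `bump`,
and so enlarges the span containing the coefficient sequence by one generator. -/
lemma prod_quad_mem {ι : Type*} [DecidableEq ι] (B : ℕ → ℤ → K)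
    (hB : ∀ k, (fun n => B k (n + 1) + B k (n - 1)) ∈ W B (k + 2))
    (F : PowerSeries K) (a : ℤ) (hF : (fun n => zcoeff F (n + a)) ∈ W B 1)
    (y : ι → K) (S : Finset ι) :
    (fun n => zcoeff (F * ∏ p ∈ S, quad (y p)) (n + a + #S)) ∈ W B (#S + 1) := by
  induction S using Finset.induction_on with
  | empty => simpa using hF
  | insert p S hp ih =>
    have := bump_mem B hB (y p) ih
    rw [Finset.card_insert_of_notMem hp]
    convert this using 1
    ext n
    rw [Finset.prod_insert hp, mul_comm (quad (y p)), ← mul_assoc, zcoeff_mul_quad]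
    simp only [bump, LinearMap.coe_mk, AddHom.coe_mk]
    push_cast
    congr 2 <;> [congr 1; congr 2; skip] <;> ring_nf

/-- If the sequences `f i` lie in the span of `B 0, …, B (r - 1)`, then the determinants of
`f i (ν j)` and of `B i (ν j)` are proportional, the ratio being independent of `ν`; it is read
off at a point `ν₀` where the matrix of the `B i` is unitriangular. -/
lemma det_eq_mul_det {r : ℕ} (B : ℕ → ℤ → K) (f : Fin r → ℤ → K) (hf : ∀ i, f i ∈ W B r)
    (ν₀ : Fin r → ℤ) (h1 : ∀ i : Fin r, B i (ν₀ i) = 1)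
    (h0 : ∀ i j : Fin r, i < j → B i (ν₀ j) = 0) (ν : Fin r → ℤ) :
    (Matrix.of fun i j => f i (ν j)).det =
      (Matrix.of fun i j : Fin r => B i (ν j)).det * (Matrix.of fun i j => f i (ν₀ j)).det := by
  have hA : ∀ i, ∃ c : Fin r → K, ∑ k, c k • B k = f i := fun i =>
    (Submodule.mem_span_range_iff_exists_fun K).1 (hf i)
  choose A hA using hA
  have hmul : ∀ μ : Fin r → ℤ, (Matrix.of fun i j => f i (μ j)) =
      Matrix.of A * Matrix.of fun i j : Fin r => B i (μ j) := by
    intro μ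
    ext i j
    simp [Matrix.mul_apply, ← hA i]
  have htri : (Matrix.of fun i j : Fin r => B i (ν₀ j)).det = 1 := by
    rw [Matrix.det_of_isLowerTriangular]
    · simp [h1]
    · intro i j hij
      exact h0 i j hij
  rw [hmul ν, hmul ν₀, Matrix.det_mul, Matrix.det_mul, htri]
  ring

/-! ### Monic polynomials and the Vandermonde factor -/

open Polynomial in
/-- Chebyshev-type polynomials: `chebU n` evaluated at `q + q⁻¹` is
`(q ^ (n + 1) - q ^ (-(n + 1))) / (q - q⁻¹)`. -/
noncomputable def chebU : ℕ → K[X]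
  | 0 => 1
  | 1 => Polynomial.X
  | n + 2 => Polynomial.X * chebU (n + 1) - chebU n

open Polynomial in
/-- The differences `chebU n - chebU (n - 2)`, with `chebU` extended by zero to negative
indices; for `n ≥ 1` the value at `q + q⁻¹` is `q ^ n + q ^ (-n)`. -/
noncomputable def chebC : ℕ → K[X]
  | 0 => 1
  | 1 => Polynomial.X
  | n + 2 => chebU (n + 2) - chebU n

open Polynomial in
lemma chebU_monic (n : ℕ) : IsMonicOfDegree (chebU n : K[X]) n := by
  induction n using Nat.twoStepInduction with
  | zero => simp [chebU]
  | one => exact isMonicOfDegree_X K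
  | more n ih1 ih2 =>
    have h := (isMonicOfDegree_X K).mul ih2
    rw [show 1 + (n + 1) = n + 2 by ring] at h
    exact h.sub (by rw [ih1.natDegree_eq]; omega)

open Polynomial in
lemma chebC_monic (n : ℕ) : IsMonicOfDegree (chebC n : K[X]) n := by
  match n with
  | 0 => simp [chebC]
  | 1 => exact isMonicOfDegree_X K
  | n + 2 => exact (chebU_monic (n + 2)).sub (by rw [(chebU_monic n).natDegree_eq]; omega)

open Polynomial in
/-- A determinant of values of monic polynomials of degrees `r - 1, …, 0` is the column-reversed
Vandermonde determinant. -/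
lemma det_monic {r : ℕ} (y : Fin r → K) (p : ℕ → K[X]) (hp : ∀ n, IsMonicOfDegree (p n) n) :
    (Matrix.of fun i j : Fin r => (p (r - 1 - j)).eval (y i)).det =
      (Matrix.of fun i j : Fin r => y i ^ (r - 1 - (j : ℕ))).det := by
  have h := Matrix.det_eval_matrixOfPolynomials_eq_det_vandermonde y (fun j => p j)
    (fun j => (hp j).natDegree_eq) (fun j => (hp j).monic)
  have e (j : Fin r) : ((Fin.revPerm j : Fin r) : ℕ) = r - 1 - j := by
    simp only [Fin.revPerm_apply, Fin.val_rev]; omega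
  have e1 : (Matrix.of fun i j : Fin r => (p (r - 1 - j)).eval (y i)) =
      (Matrix.of fun i j : Fin r => (p j).eval (y i)).submatrix id Fin.revPerm := by
    ext i j; simp only [Matrix.submatrix_apply, Matrix.of_apply, e, id]
  have e2 : (Matrix.of fun i j : Fin r => y i ^ (r - 1 - (j : ℕ))) =
      (Matrix.vandermonde y).submatrix id Fin.revPerm := by
    ext i j; simp only [Matrix.submatrix_apply, Matrix.of_apply, Matrix.vandermonde_apply, e, id]
  rw [e1, e2, Matrix.det_permute', Matrix.det_permute', h]

/-! ### The coefficients of `1 / (1 - (a + a⁻¹) t + t ^ 2)` -/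

section OneVariable

variable {a : K} (ha : a ≠ 0)
include ha

lemma zcoeff_rec (m : ℤ) :
    zcoeff (geom a * geom a⁻¹) m = (a + a⁻¹) * zcoeff (geom a * geom a⁻¹) (m - 1)
      - zcoeff (geom a * geom a⁻¹) (m - 2) + if m = 0 then 1 else 0 := by
  have h := zcoeff_mul_quad (geom a * geom a⁻¹) (a + a⁻¹) m
  rw [geom_mul_geom_inv_mul_quad ha] at h
  have h1 : zcoeff (1 : PowerSeries K) m = if m = 0 then 1 else 0 := by
    rcases lt_or_ge m 0 with hm | hm
    · rw [zcoeff_neg _ hm, if_neg hm.ne]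
    · lift m to ℕ using hm
      simp [zcoeff_natCast, PowerSeries.coeff_one]
  rw [h1] at h
  linear_combination -h

lemma zcoeff_zero : zcoeff (geom a * geom a⁻¹) 0 = 1 := by
  rw [zcoeff_rec ha, zcoeff_neg _ (by norm_num), zcoeff_neg _ (by norm_num)]; simp

lemma zcoeff_one : zcoeff (geom a * geom a⁻¹) 1 = a + a⁻¹ := by
  rw [zcoeff_rec ha, zcoeff_neg _ (show (1 : ℤ) - 2 < 0 by norm_num), sub_self, zcoeff_zero ha]
  simp

lemma zcoeff_add_two (n : ℕ) : zcoeff (geom a * geom a⁻¹) ((n + 2 : ℕ) : ℤ) =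
    (a + a⁻¹) * zcoeff (geom a * geom a⁻¹) ((n + 1 : ℕ) : ℤ)
      - zcoeff (geom a * geom a⁻¹) (n : ℤ) := by
  rw [zcoeff_rec ha, if_neg (by omega)]
  rw [show ((n + 2 : ℕ) : ℤ) - 1 = (n + 1 : ℕ) by push_cast; ring,
    show ((n + 2 : ℕ) : ℤ) - 2 = n by push_cast; ring, add_zero]

lemma zcoeff_eq_chebU (n : ℕ) :
    zcoeff (geom a * geom a⁻¹) (n : ℤ) = (chebU n).eval (a + a⁻¹) := by
  induction n using Nat.twoStepInduction with
  | zero => simpa [chebU] using zcoeff_zero ha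
  | one => simpa [chebU] using zcoeff_one ha
  | more n ih1 ih2 => rw [zcoeff_add_two ha, ih1, ih2]; simp [chebU]

lemma zcoeff_eq_chebC (n : ℕ) :
    zcoeff (geom a * geom a⁻¹) (n : ℤ) - zcoeff (geom a * geom a⁻¹) ((n : ℤ) - 2) =
      (chebC n).eval (a + a⁻¹) := by
  match n with
  | 0 => rw [zcoeff_neg _ (show ((0 : ℕ) : ℤ) - 2 < 0 by norm_num)]; simp [chebC, zcoeff_zero ha]
  | 1 => rw [zcoeff_neg _ (show ((1 : ℕ) : ℤ) - 2 < 0 by norm_num)]; simp [chebC, zcoeff_one ha]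
  | n + 2 =>
    rw [show ((n + 2 : ℕ) : ℤ) - 2 = n by push_cast; ring, zcoeff_eq_chebU ha,
      zcoeff_eq_chebU ha, chebC, Polynomial.eval_sub]

lemma sub_mul_zcoeff (n : ℕ) : (a - a⁻¹) * zcoeff (geom a * geom a⁻¹) (n : ℤ) =
    a ^ ((n : ℤ) + 1) - a ^ (-((n : ℤ) + 1)) := by
  have hz : ∀ n : ℕ, a ^ ((n : ℤ) + 1) - a ^ (-((n : ℤ) + 1)) = a ^ (n + 1) - a⁻¹ ^ (n + 1) := by
    intro n
    rw [inv_pow, ← zpow_natCast, zpow_neg]; push_cast; rfl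
  rw [hz]
  have hi : a * a⁻¹ = 1 := mul_inv_cancel₀ ha
  induction n using Nat.twoStepInduction with
  | zero => simp [zcoeff_zero ha]
  | one => simp only [Nat.cast_one, zcoeff_one ha]; ring
  | more n ih1 ih2 =>
    rw [zcoeff_add_two ha]
    linear_combination (a + a⁻¹) * ih2 - ih1 + (a ^ (n + 1) - a⁻¹ ^ (n + 1)) * hi

lemma zcoeff_sub_zcoeff (n : ℕ) :
    zcoeff (geom a * geom a⁻¹) ((n + 1 : ℕ) : ℤ) - zcoeff (geom a * geom a⁻¹) ((n : ℤ) - 1) =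
    a ^ ((n : ℤ) + 1) + a ^ (-((n : ℤ) + 1)) := by
  have hz : ∀ n : ℕ, a ^ ((n : ℤ) + 1) + a ^ (-((n : ℤ) + 1)) = a ^ (n + 1) + a⁻¹ ^ (n + 1) := by
    intro n
    rw [inv_pow, ← zpow_natCast, zpow_neg]; push_cast; rfl
  rw [hz]
  have hi : a * a⁻¹ = 1 := mul_inv_cancel₀ ha
  induction n using Nat.twoStepInduction with
  | zero =>
    rw [zcoeff_neg _ (show ((0 : ℕ) : ℤ) - 1 < 0 by norm_num)]
    simp [zcoeff_one ha]
  | one =>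
    rw [zcoeff_add_two ha]
    simp only [zero_add, Nat.cast_one, sub_self, Nat.cast_zero, zcoeff_one ha, zcoeff_zero ha]
    linear_combination 2 * hi
  | more n ih1 ih2 =>
    rw [show ((n + 1 : ℕ) : ℤ) - 1 = n by push_cast; ring] at ih2
    rw [show ((n + 2 : ℕ) : ℤ) - 1 = (n + 1 : ℕ) by push_cast; ring]
    have h1 := zcoeff_add_two ha (n + 1)
    have h2 := zcoeff_rec ha ((n + 1 : ℕ) : ℤ)
    rw [if_neg (by omega), show ((n + 1 : ℕ) : ℤ) - 1 = n by push_cast; ring,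
      show ((n + 1 : ℕ) : ℤ) - 2 = n - 1 by push_cast; ring] at h2
    linear_combination h1 - h2 + (a + a⁻¹) * ih2 - ih1 + (a ^ (n + 1) + a⁻¹ ^ (n + 1)) * hi

end OneVariable

/-! ### The symplectic and even orthogonal identities -/

section Main

variable {r : ℕ} (q : Fin r → K) (hq : ∀ i, q i ≠ 0)

/-- The generating series of the complete homogeneous symmetric polynomials in the `q i` and
their inverses. -/
noncomputable def genH : PowerSeries K := ∏ i, (geom (q i) * geom (q i)⁻¹)

include hq

lemma genH_mul_prod_erase (i : Fin r) :
    genH q * ∏ p ∈ univ.erase i, quad (q p + (q p)⁻¹) = geom (q i) * geom (q i)⁻¹ := by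
  rw [genH, ← Finset.mul_prod_erase univ _ (Finset.mem_univ i), mul_assoc,
    ← Finset.prod_mul_distrib,
    Finset.prod_congr rfl (fun p _ => geom_mul_geom_inv_mul_quad (hq p))]
  simp

/-- The symplectic half: `ν j` stands for `lam j - j - 1`, but the identity holds for every `ν`. -/
lemma det_symplectic (ν : Fin r → ℤ) :
    (Matrix.of fun i j : Fin r => zcoeff (geom (q i) * geom (q i)⁻¹) (ν j + r - 1)).det =
    (Matrix.of fun i j : Fin r => if (i : ℕ) = 0 then zcoeff (genH q) (ν j)
      else zcoeff (genH q) (ν j + i) + zcoeff (genH q) (ν j - i)).det *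
    (Matrix.of fun i j : Fin r => (q i + (q i)⁻¹) ^ (r - 1 - (j : ℕ))).det := by
  set B : ℕ → ℤ → K := fun k n => if k = 0 then zcoeff (genH q) n
      else zcoeff (genH q) (n + k) + zcoeff (genH q) (n - k) with hBdef
  have hB : ∀ k, (fun n => B k (n + 1) + B k (n - 1)) ∈ W B (k + 2) := by
    intro k
    match k with
    | 0 =>
      convert mem_W B (show 1 < 2 by norm_num) using 1
      ext n; simp [hBdef]
    -- `B 0` carries a single summand, whence the coefficient `2`
    | 1 =>
      have : (fun n => B 1 (n + 1) + B 1 (n - 1)) = B 2 + (2 : K) • B 0 := by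
        ext n
        simp [hBdef]
        ring_nf
      rw [this]
      exact Submodule.add_mem _ (mem_W B (by norm_num))
        (Submodule.smul_mem _ _ (mem_W B (by norm_num)))
    | k + 2 =>
      have : (fun n => B (k + 2) (n + 1) + B (k + 2) (n - 1)) = B (k + 3) + B (k + 1) := by
        ext n
        simp [hBdef]
        ring_nf
      rw [this]
      exact Submodule.add_mem _ (mem_W B (by omega)) (mem_W B (by omega))
  have hf : ∀ i, (fun n => zcoeff (geom (q i) * geom (q i)⁻¹) (n + r - 1)) ∈ W B r := by
    intro i
    have h := prod_quad_mem B hB (genH q) 0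
      (by convert mem_W B (show 0 < 1 by norm_num) using 1; ext n; simp [hBdef])
      (fun p => q p + (q p)⁻¹) (univ.erase i)
    have hr : 0 < r := i.pos
    have hc : #(univ.erase i) = r - 1 := by simp
    rw [genH_mul_prod_erase q hq, hc, Nat.sub_add_cancel hr] at h
    convert h using 3
    push_cast [Nat.cast_sub (show 1 ≤ r from hr)]
    ring
  have h00 : zcoeff (genH q) 0 = 1 := by
    simp [zcoeff, genH, geom, map_prod]
  -- `B k (-j)` vanishes for `k < j`, because all indices are then negative
  rw [det_eq_mul_det B _ hf (fun j => -(j : ℤ)) ?_ ?_ ν]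
  · congr 1
    rw [← det_monic _ chebU chebU_monic]
    congr 1
    ext i j
    simp only [Matrix.of_apply]
    rw [← zcoeff_eq_chebU (hq i)]
    congr 1
    omega
  · intro i
    by_cases hi : (i : ℕ) = 0
    · simp [hBdef, hi, h00]
    · simp only [hBdef, hi, if_false, neg_add_cancel, h00]
      rw [zcoeff_neg _ (by omega), add_zero]
  · intro i j hij
    have : (i : ℕ) < j := hij
    simp only [hBdef]
    split_ifs
    · exact zcoeff_neg _ (by omega)
    · rw [zcoeff_neg _ (by omega), zcoeff_neg _ (by omega), add_zero]

/-- The even orthogonal half, again for every `ν`. The entry on the left is `1`, not `2`, where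
`ν j + r = 0`. -/
lemma det_orthogonal (ν : Fin r → ℤ) :
    (Matrix.of fun i j : Fin r => zcoeff (geom (q i) * geom (q i)⁻¹) (ν j + r) -
      zcoeff (geom (q i) * geom (q i)⁻¹) (ν j + r - 2)).det =
    (Matrix.of fun i j : Fin r =>
      zcoeff (genH q) (ν j + (i + 1)) - zcoeff (genH q) (ν j - (i + 1))).det *
    (Matrix.of fun i j : Fin r => (q i + (q i)⁻¹) ^ (r - 1 - (j : ℕ))).det := by
  set B : ℕ → ℤ → K := fun k n =>
    zcoeff (genH q) (n + (k + 1)) - zcoeff (genH q) (n - (k + 1)) with hBdef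
  have hB : ∀ k, (fun n => B k (n + 1) + B k (n - 1)) ∈ W B (k + 2) := by
    intro k
    match k with
    | 0 =>
      convert mem_W B (show 1 < 2 by norm_num) using 1
      ext n
      simp [hBdef]
      ring_nf
    | k + 1 =>
      have : (fun n => B (k + 1) (n + 1) + B (k + 1) (n - 1)) = B (k + 2) + B k := by
        ext n
        simp [hBdef]
        ring_nf
      rw [this]
      exact Submodule.add_mem _ (mem_W B (by omega)) (mem_W B (by omega))
  have hX : ∀ (F : PowerSeries K) (m : ℤ),
      zcoeff (F - PowerSeries.X * (PowerSeries.X * F)) m = zcoeff F m - zcoeff F (m - 2) := by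
    intro F m
    rw [zcoeff_sub, zcoeff_X_mul, zcoeff_X_mul, sub_sub]; norm_num
  have hf : ∀ i, (fun n => zcoeff (geom (q i) * geom (q i)⁻¹) (n + r) -
      zcoeff (geom (q i) * geom (q i)⁻¹) (n + r - 2)) ∈ W B r := by
    intro i
    -- `(1 - t ^ 2) * genH q` has coefficients `H m - H (m - 2)`, which is `B 0` up to a shift
    have h := prod_quad_mem B hB (genH q - PowerSeries.X * (PowerSeries.X * genH q)) 1
      (by
        convert mem_W B (show 0 < 1 by norm_num) using 1
        ext n
        rw [hX]
        simp [hBdef]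
        ring_nf)
      (fun p => q p + (q p)⁻¹) (univ.erase i)
    have hr : 0 < r := i.pos
    have hc : #(univ.erase i) = r - 1 := by simp
    rw [sub_mul, mul_assoc, mul_assoc, genH_mul_prod_erase q hq, hc, Nat.sub_add_cancel hr] at h
    convert h using 1
    ext n
    rw [hX]
    push_cast [Nat.cast_sub (show 1 ≤ r from hr)]
    congr 2 <;> ring
  have h00 : zcoeff (genH q) 0 = 1 := by
    simp [zcoeff, genH, geom, map_prod]
  rw [det_eq_mul_det B _ hf (fun j => -(j : ℤ) - 1) ?_ ?_ ν]
  · congr 1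
    rw [← det_monic _ chebC chebC_monic]
    congr 1
    ext i j
    simp only [Matrix.of_apply]
    rw [← zcoeff_eq_chebC (hq i)]
    congr 2 <;> omega
  · intro i
    simp only [hBdef]
    rw [show -(i : ℤ) - 1 + (i + 1) = 0 by ring, h00, zcoeff_neg _ (by omega), sub_zero]
  · intro i j hij
    have : (i : ℕ) < j := hij
    simp only [hBdef]
    rw [zcoeff_neg _ (by omega), zcoeff_neg _ (by omega), sub_zero]

/-- The full identity for nonzero elements `q i` of an arbitrary field. -/
lemma field_identity (lam : Fin r → ℤ) (hpos : ∀ j, 1 ≤ lam j) (H : ℤ → K)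
    (hH : ∀ m, H m = zcoeff (genH q) m) :
    Matrix.det (Matrix.of fun i j : Fin r =>
        q i ^ (lam j + r - 1 - (j.val : ℤ)) + q i ^ (-(lam j + r - 1 - (j.val : ℤ)))) +
    Matrix.det (Matrix.of fun i j : Fin r =>
        q i ^ (lam j + r - 1 - (j.val : ℤ)) - q i ^ (-(lam j + r - 1 - (j.val : ℤ)))) =
    (Matrix.det (Matrix.of fun i j : Fin r =>
        H (lam j + (i.val : ℤ) - (j.val : ℤ)) - H (lam j - (i.val : ℤ) - (j.val : ℤ) - 2)) +
      (∏ i : Fin r, (q i - (q i)⁻¹)) *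
      Matrix.det (Matrix.of fun i j : Fin r =>
        if (i : ℕ) = 0 then H (lam j - (j.val : ℤ) - 1)
        else H (lam j + (i.val : ℤ) - (j.val : ℤ) - 1) +
          H (lam j - (i.val : ℤ) - (j.val : ℤ) - 1))) *
    Matrix.det (Matrix.of fun i j : Fin r =>
        (q i + (q i)⁻¹) ^ (r - 1 - j.val)) := by
  have hS := det_symplectic q hq (fun j => lam j - (j : ℤ) - 1)
  have hO := det_orthogonal q hq (fun j => lam j - (j : ℤ) - 1)
  rw [add_mul, mul_assoc]
  congr 1
  · convert hO using 3
    · ext i j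
      -- positivity of `lam` makes the exponent at least one, so it is `n + 1` for a natural `n`
      obtain ⟨n, hn⟩ : ∃ n : ℕ, lam j + r - 1 - (j.val : ℤ) = n + 1 :=
        ⟨(lam j + r - 2 - (j.val : ℤ)).toNat, by have := hpos j; omega⟩
      rw [hn, ← zcoeff_sub_zcoeff (hq i)]
      congr 2 <;> push_cast <;> linarith
    · ext i j
      simp only [Matrix.of_apply, hH]
      congr 2 <;> ring
  · have hN : (Matrix.of fun i j : Fin r =>
        if (i : ℕ) = 0 then H (lam j - (j.val : ℤ) - 1)
        else H (lam j + (i.val : ℤ) - (j.val : ℤ) - 1) +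
          H (lam j - (i.val : ℤ) - (j.val : ℤ) - 1)) =
        Matrix.of fun i j : Fin r => if (i : ℕ) = 0 then zcoeff (genH q) (lam j - (j : ℤ) - 1)
          else zcoeff (genH q) (lam j - (j : ℤ) - 1 + i) +
            zcoeff (genH q) (lam j - (j : ℤ) - 1 - i) := by
      ext i j
      simp only [Matrix.of_apply, hH]
      congr 3 <;> ring_nf
    rw [hN, ← hS, ← Matrix.det_mul_column]
    congr 1
    ext i j
    obtain ⟨n, hn⟩ : ∃ n : ℕ, lam j + r - 1 - (j.val : ℤ) = n + 1 :=
      ⟨(lam j + r - 2 - (j.val : ℤ)).toNat, by have := hpos j; omega⟩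
    simp only [Matrix.of_apply]
    rw [hn, ← sub_mul_zcoeff (hq i)]
    congr 2
    linarith

end Main

end SpinJT

/-- Jacobi–Trudy identity for the tensor representations of Spin(2r) with λ_r > 0,
in alternant form. -/
theorem spin_even_tensor_jacobi_trudy (r : ℕ) (hr : 1 ≤ r)
    (lam : Fin r → ℤ) (hanti : Antitone lam) (hpos : ∀ j, 1 ≤ lam j) :
    let K := FractionRing (MvPolynomial (Fin r) ℚ)
    let q : Fin r → K := fun i => algebraMap (MvPolynomial (Fin r) ℚ) K (X i)
    let H : ℤ → K := hpoly (Sum.elim q fun i => (q i)⁻¹)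
    Matrix.det (Matrix.of fun i j : Fin r =>
        q i ^ (lam j + r - 1 - (j.val : ℤ)) + q i ^ (-(lam j + r - 1 - (j.val : ℤ)))) +
    Matrix.det (Matrix.of fun i j : Fin r =>
        q i ^ (lam j + r - 1 - (j.val : ℤ)) - q i ^ (-(lam j + r - 1 - (j.val : ℤ)))) =
    (Matrix.det (Matrix.of fun i j : Fin r =>
        H (lam j + (i.val : ℤ) - (j.val : ℤ)) - H (lam j - (i.val : ℤ) - (j.val : ℤ) - 2)) +
      (∏ i : Fin r, (q i - (q i)⁻¹)) *
      Matrix.det (Matrix.of fun i j : Fin r =>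
        if (i : ℕ) = 0 then H (lam j - (j.val : ℤ) - 1)
        else H (lam j + (i.val : ℤ) - (j.val : ℤ) - 1) + H (lam j - (i.val : ℤ) - (j.val : ℤ) - 1))) *
    Matrix.det (Matrix.of fun i j : Fin r =>
        (q i + (q i)⁻¹) ^ (r - 1 - j.val)) := by
  intro K q H
  have hq : ∀ i, q i ≠ 0 := fun i => by
    simp only [q, ne_eq, FaithfulSMul.algebraMap_eq_zero_iff]
    exact MvPolynomial.X_ne_zero i
  exact SpinJT.field_identity q hq lam hpos H fun m => SpinJT.hpoly_sum_elim q m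
end
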